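/- arXiv:2306.08351 — 4 statements merged into one kernel-verified Lean document; each statement's English description precedes it below -/
import Mathlib

section
/- Let $A$ be an almost Poisson algebra over a field $k$ of characteristic zero, with commutative associative product $(a,b)\mapsto ab$ and anticommutative biderivation bracket $(a,b)\mapsto\{a,b\}$. Define the depolarized product $a\cdot b := ab + \{a,b\}$. Then $(A,\cdot)$ is a Kokoris algebra, i.e., for all $a_1,a_2,a_3\in A$ one has $J(a_1,a_2,a_3) = 4(a_1,a_2,a_3) - [[a_1,a_3],a_2]$, where $[x,y] = x\cdot y - y\cdot x$, $(x,y,z) = (x\cdot y)\cdot z - x\cdot(y\cdot z)$, and $J(x,y,z) = [[x,y],z] + [[y,z],x] + [[z,x],y]$. -/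
/-!
The commutator kills the commutative summand of `ab + {a, b}` and doubles the bracket, so it is
`2{x, y}`, and its Jacobiator is `4` times that of the bracket. In the associator of `ab + {a, b}`
the product contributes nothing by associativity, and the terms mixing product and bracket cancel
by the Leibniz identity; what remains is the associator of the bracket, which by anticommutativity
is the Jacobiator of the bracket plus `{{x, z}, y}`. Multiplying by `4` and absorbing
`4{{x, z}, y} = [[x, z], y]` gives the Kokoris identity.
-/

/-- A bilinear product on a `k`-module `A`, with no further axioms. It is data rather than an
algebra instance because a single `A` carries several products here. -/
abbrev BilinProd (k A : Type*) [CommRing k] [AddCommGroup A] [Module k A] : Type _ :=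
  A →ₗ[k] A →ₗ[k] A

namespace BilinProd

variable {k A : Type*} [CommRing k] [AddCommGroup A] [Module k A]

/-- The commutator `[x, y] = p x y - p y x` of a product `p`, itself as a bilinear product. -/
def commutator (p : BilinProd k A) : BilinProd k A :=
  p - p.flip

/-- The associator `(x, y, z)` of a product, measuring its failure to be associative. -/
def associator (p : BilinProd k A) (x y z : A) : A :=
  p (p x y) z - p x (p y z)

/-- The Jacobiator of a bracket `b`, measuring its failure to satisfy the Jacobi identity. The
Jacobiator of the commutator of a product `p` is `p.commutator.jacobiator`. -/
def jacobiator (b : BilinProd k A) (x y z : A) : A :=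
  b (b x y) z + b (b y z) x + b (b z x) y

/-- The identity `J(x, y, z) = 4(x, y, z) - [[x, z], y]` defining Kokoris algebras. -/
def IsKokoris (p : BilinProd k A) : Prop :=
  ∀ x y z, p.commutator.jacobiator x y z =
    (4 : k) • p.associator x y z - p.commutator (p.commutator x z) y

/-- `m` and `br` are the product and the bracket of an almost Poisson algebra. The depolarized
product of this algebra is the bilinear map `m + br`. -/
structure IsAlmostPoisson (m br : BilinProd k A) : Prop where
  mul_comm : ∀ a b, m a b = m b a
  mul_assoc : ∀ a b c, m (m a b) c = m a (m b c)
  bracket_anticomm : ∀ a b, br a b = -br b a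
  bracket_mul_left : ∀ a b c, br (m a b) c = m (br a c) b + m a (br b c)

variable {m br : BilinProd k A}

lemma commutator_add_of_comm_of_anticomm (hcomm : ∀ a b, m a b = m b a)
    (hanti : ∀ a b, br a b = -br b a) : (m + br).commutator = (2 : k) • br := by
  ext x y
  simp only [commutator, LinearMap.sub_apply, LinearMap.add_apply, LinearMap.flip_apply,
    LinearMap.smul_apply]
  rw [hcomm y x, hanti y x]
  module

lemma smul_apply_smul_apply (c : k) (b : BilinProd k A) (x y z : A) :
    (c • b) ((c • b) x y) z = c ^ 2 • b (b x y) z := by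
  simp only [LinearMap.smul_apply, map_smul, smul_smul, sq]

lemma jacobiator_smul (c : k) (b : BilinProd k A) (x y z : A) :
    (c • b).jacobiator x y z = c ^ 2 • b.jacobiator x y z := by
  simp only [jacobiator, smul_apply_smul_apply, smul_add]

lemma associator_add (p q : BilinProd k A) (x y z : A) :
    (p + q).associator x y z = p.associator x y z + q.associator x y z +
      (q (p x y) z + p (q x y) z - (p x (q y z) + q x (p y z))) := by
  simp only [associator, LinearMap.add_apply, map_add]
  abel

lemma associator_eq_jacobiator_add_of_anticomm (hanti : ∀ a b, br a b = -br b a) (x y z : A) :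
    br.associator x y z = br.jacobiator x y z + br (br x z) y := by
  have hcancel : br (br z x) y = -br (br x z) y := by
    rw [hanti z x, map_neg, LinearMap.neg_apply]
  rw [associator, jacobiator, hanti x (br y z), hcancel]
  abel

namespace IsAlmostPoisson

lemma bracket_mul_right (h : IsAlmostPoisson m br) (a b c : A) :
    br a (m b c) = m (br a b) c + m b (br a c) := by
  rw [h.bracket_anticomm a (m b c), h.bracket_mul_left, h.bracket_anticomm a b,
    h.bracket_anticomm a c, map_neg, map_neg, LinearMap.neg_apply, neg_add]

lemma associator_mul_add_bracket (h : IsAlmostPoisson m br) (x y z : A) :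
    (m + br).associator x y z = br.associator x y z := by
  have hassoc : m.associator x y z = 0 := sub_eq_zero.mpr (h.mul_assoc x y z)
  have hmixed : br (m x y) z + m (br x y) z = m x (br y z) + br x (m y z) := by
    rw [h.bracket_mul_left, h.bracket_mul_right, h.mul_comm (br x z) y]
    abel
  rw [associator_add, hassoc, hmixed, sub_self, zero_add, add_zero]

end IsAlmostPoisson

end BilinProd

open BilinProd

theorem almostPoisson_depolarization_isKokoris_general {k A : Type*} [CommRing k]
    [AddCommGroup A] [Module k A] {m br : BilinProd k A} (h : IsAlmostPoisson m br) :
    (m + br).IsKokoris := by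
  intro x y z
  have hcommutator : (m + br).commutator = (2 : k) • br :=
    commutator_add_of_comm_of_anticomm h.mul_comm h.bracket_anticomm
  have hassociator : (m + br).associator x y z = br.jacobiator x y z + br (br x z) y := by
    rw [h.associator_mul_add_bracket, associator_eq_jacobiator_add_of_anticomm h.bracket_anticomm]
  rw [hcommutator, hassociator, jacobiator_smul, smul_apply_smul_apply]
  module

/-- The depolarized product `a ⬝ b = ab + {a,b}` of an almost Poisson
algebra satisfies the Kokoris identity
`J(a₁,a₂,a₃) = 4(a₁,a₂,a₃) - [[a₁,a₃],a₂]`. -/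
theorem almostPoisson_depolarization_isKokoris
    {k A : Type*} [Field k] [CharZero k] [AddCommGroup A] [Module k A]
    (m : A →ₗ[k] A →ₗ[k] A) (br : A →ₗ[k] A →ₗ[k] A)
    (hcomm : ∀ a b : A, m a b = m b a)
    (hassoc : ∀ a b c : A, m (m a b) c = m a (m b c))
    (hanti : ∀ a b : A, br a b = - br b a)
    (hleib : ∀ a₁ a₂ a₃ : A, br (m a₁ a₂) a₃ = m (br a₁ a₃) a₂ + m a₁ (br a₂ a₃)) :
    ∀ a₁ a₂ a₃ : A,
      let dot : A → A → A := fun x y => m x y + br x y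
      let lb : A → A → A := fun x y => dot x y - dot y x
      let asc : A → A → A → A := fun x y z => dot (dot x y) z - dot x (dot y z)
      lb (lb a₁ a₂) a₃ + lb (lb a₂ a₃) a₁ + lb (lb a₃ a₁) a₂
        = (4 : k) • asc a₁ a₂ a₃ - lb (lb a₁ a₃) a₂ :=
  almostPoisson_depolarization_isKokoris_general ⟨hcomm, hassoc, hanti, hleib⟩
end

section
/- Let $A$ be a Kokoris algebra over a field $k$ of characteristic zero, with bilinear product $a\cdot b$ satisfying $J(a_1,a_2,a_3) = 4(a_1,a_2,a_3) - [[a_1,a_3],a_2]$. Define the polarized operations $a b := \tfrac{1}{2}(a\cdot b + b\cdot a)$ and $\{a,b\} := \tfrac{1}{2}(a\cdot b - b\cdot a)$. Then $(A, ab, \{\, ,\,\})$ is an almost Poisson algebra: the product $ab$ is commutative and associative, the bracket $\{a,b\}$ is anticommutative, and the Leibniz identity $\{a_1a_2,a_3\} = \{a_1,a_3\}a_2 + a_1\{a_2,a_3\}$ holds. -/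
/-!
Write `x ⬝ y = xy + {x,y}`, and let `M(a,b,c) = (ab)c - a(bc)` and
`L(a,b;c) = {ab,c} - {a,c}b - a{b,c}`. The double brackets on the two sides of the Kokoris
identity cancel, which leaves `M(a,b,c) + L(a,b;c) + L(b,c;a) = 0`. Under `a ↔ c` the term `M` is
antisymmetric and `L(a,b;c) + L(b,c;a)` is symmetric, so both vanish. Hence `L` changes sign under
the cyclic shift of its arguments; as this shift has order three, `L = -L`.
-/

theorem eq_zero_of_eq_neg_of_invertible_two (R : Type*) {M : Type*} [Semiring R]
    [AddCommGroup M] [Module R M] [Invertible (2 : R)] {x : M} (h : x = -x) : x = 0 := by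
  rw [← (isUnit_of_invertible (2 : R)).smul_eq_zero, two_smul]
  exact eq_neg_iff_add_eq_zero.mp h

section Bilinear

variable {R A : Type*} [CommRing R] [AddCommGroup A] [Module R A]

/-- The commutator `[x, y] = x ⬝ y - y ⬝ x` of a bilinear product. -/
def bilinCommutator (dot : A →ₗ[R] A →ₗ[R] A) : A →ₗ[R] A →ₗ[R] A :=
  dot - dot.flip

/-- The associator `(x, y, z) = (x ⬝ y) ⬝ z - x ⬝ (y ⬝ z)` of a bilinear product. Mathlib's
`associator` is the same notion for the multiplication of a nonassociative ring. -/
def bilinAssociator (dot : A →ₗ[R] A →ₗ[R] A) (x y z : A) : A :=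
  dot (dot x y) z - dot x (dot y z)

/-- The failure `{xy, z} - {x, z}y - x{y, z}` of the Leibniz identity for a product and a
bracket. -/
def leibnizDefect (mul br : A →ₗ[R] A →ₗ[R] A) (x y z : A) : A :=
  br (mul x y) z - mul (br x z) y - mul x (br y z)

/-- The defining identity `J(a, b, c) = 4(a, b, c) - [[a, c], b]` of a Kokoris algebra, where `J`
is the Jacobiator of the commutator. -/
def IsKokoris (dot : A →ₗ[R] A →ₗ[R] A) : Prop :=
  ∀ a b c : A,
    bilinCommutator dot (bilinCommutator dot a b) c
      + bilinCommutator dot (bilinCommutator dot b c) a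
      + bilinCommutator dot (bilinCommutator dot c a) b
    = (4 : R) • bilinAssociator dot a b c - bilinCommutator dot (bilinCommutator dot a c) b

/-- The axioms of an almost Poisson algebra: a commutative associative product and an
anticommutative bracket, not assumed to satisfy the Jacobi identity, that is a derivation of the
product in each argument. -/
structure IsAlmostPoisson (mul br : A →ₗ[R] A →ₗ[R] A) : Prop where
  mul_comm : ∀ a b, mul a b = mul b a
  mul_assoc : ∀ a b c, mul (mul a b) c = mul a (mul b c)
  bracket_anticomm : ∀ a b, br a b = -br b a
  leibniz : ∀ a b c, br (mul a b) c = mul (br a c) b + mul a (br b c)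

variable {mul br : A →ₗ[R] A →ₗ[R] A}

theorem bilinAssociator_reverse (hmul : ∀ a b, mul a b = mul b a) (a b c : A) :
    bilinAssociator mul c b a = -bilinAssociator mul a b c := by
  simp only [bilinAssociator, hmul c, hmul b a, hmul _ a, neg_sub]

theorem leibnizDefect_comm (hmul : ∀ a b, mul a b = mul b a) (a b c : A) :
    leibnizDefect mul br b a c = leibnizDefect mul br a b c := by
  rw [leibnizDefect, leibnizDefect, hmul b a, hmul b, hmul _ a, sub_right_comm]

theorem bilinCommutator_add (hmul : ∀ a b, mul a b = mul b a) (hbr : ∀ a b, br a b = -br b a)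
    (a b : A) : bilinCommutator (mul + br) a b = (2 : R) • br a b := by
  simp only [bilinCommutator, LinearMap.sub_apply, LinearMap.add_apply, LinearMap.flip_apply,
    hmul b a, hbr b a]
  module

theorem bilinAssociator_add (hmul : ∀ a b, mul a b = mul b a) (hbr : ∀ a b, br a b = -br b a)
    (a b c : A) :
    bilinAssociator (mul + br) a b c
      = bilinAssociator mul a b c
        + (leibnizDefect mul br a b c + leibnizDefect mul br b c a)
        + bilinAssociator br a b c := by
  simp only [bilinAssociator, leibnizDefect, LinearMap.add_apply, map_add]
  rw [hbr (mul b c) a, hbr b a, hbr c a, map_neg, map_neg, LinearMap.neg_apply,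
    hmul b (br a c)]
  abel

theorem jacobiator_eq_bilinAssociator_sub (hbr : ∀ a b, br a b = -br b a) (a b c : A) :
    br (br a b) c + br (br b c) a + br (br c a) b
      = bilinAssociator br a b c - br (br a c) b := by
  rw [bilinAssociator, hbr (br b c) a, hbr c a, map_neg, LinearMap.neg_apply]
  abel

variable [Invertible (2 : R)]

theorem IsKokoris.bilinAssociator_add_leibnizDefects_eq_zero (h : IsKokoris (mul + br))
    (hmul : ∀ a b, mul a b = mul b a) (hbr : ∀ a b, br a b = -br b a) (a b c : A) :
    bilinAssociator mul a b c
      + (leibnizDefect mul br a b c + leibnizDefect mul br b c a) = 0 := by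
  have four_isUnit : IsUnit (4 : R) := by
    rw [show (4 : R) = 2 * 2 by norm_num]
    exact (isUnit_of_invertible 2).mul (isUnit_of_invertible 2)
  have kokoris := h a b c
  simp only [bilinCommutator_add hmul hbr, map_smul, LinearMap.smul_apply,
    bilinAssociator_add hmul hbr] at kokoris
  rw [← four_isUnit.smul_eq_zero]
  linear_combination (norm := module)
    (4 : R) • jacobiator_eq_bilinAssociator_sub hbr a b c - kokoris

theorem IsKokoris.bilinAssociator_eq_zero (h : IsKokoris (mul + br))
    (hmul : ∀ a b, mul a b = mul b a) (hbr : ∀ a b, br a b = -br b a) (a b c : A) :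
    bilinAssociator mul a b c = 0 := by
  have forward := h.bilinAssociator_add_leibnizDefects_eq_zero hmul hbr a b c
  have backward := h.bilinAssociator_add_leibnizDefects_eq_zero hmul hbr c b a
  rw [bilinAssociator_reverse hmul, leibnizDefect_comm hmul b c, leibnizDefect_comm hmul a b,
    add_comm (leibnizDefect mul br b c a)] at backward
  apply eq_zero_of_eq_neg_of_invertible_two R
  exact add_right_cancel (forward.trans backward.symm)

theorem IsKokoris.leibnizDefect_eq_zero (h : IsKokoris (mul + br))
    (hmul : ∀ a b, mul a b = mul b a) (hbr : ∀ a b, br a b = -br b a) (a b c : A) :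
    leibnizDefect mul br a b c = 0 := by
  have cyclic (x y z : A) : leibnizDefect mul br x y z = -leibnizDefect mul br y z x := by
    have sum_eq_zero := h.bilinAssociator_add_leibnizDefects_eq_zero hmul hbr x y z
    rw [h.bilinAssociator_eq_zero hmul hbr, zero_add] at sum_eq_zero
    exact eq_neg_of_add_eq_zero_left sum_eq_zero
  apply eq_zero_of_eq_neg_of_invertible_two R
  calc leibnizDefect mul br a b c
      = -leibnizDefect mul br b c a := cyclic a b c
    _ = leibnizDefect mul br c a b := by rw [cyclic b c a, neg_neg]
    _ = -leibnizDefect mul br a b c := cyclic c a b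

theorem IsKokoris.isAlmostPoisson (h : IsKokoris (mul + br))
    (hmul : ∀ a b, mul a b = mul b a) (hbr : ∀ a b, br a b = -br b a) :
    IsAlmostPoisson mul br where
  mul_comm := hmul
  mul_assoc a b c := sub_eq_zero.mp (h.bilinAssociator_eq_zero hmul hbr a b c)
  bracket_anticomm := hbr
  leibniz a b c := by
    have defect_eq_zero := h.leibnizDefect_eq_zero hmul hbr a b c
    rwa [leibnizDefect, sub_sub, sub_eq_zero] at defect_eq_zero

/-- The commutative product `½(x ⬝ y + y ⬝ x)` of the polarization. -/
def polarizedProduct (dot : A →ₗ[R] A →ₗ[R] A) : A →ₗ[R] A →ₗ[R] A :=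
  ⅟(2 : R) • (dot + dot.flip)

/-- The anticommutative bracket `½(x ⬝ y - y ⬝ x)` of the polarization. -/
def polarizedBracket (dot : A →ₗ[R] A →ₗ[R] A) : A →ₗ[R] A →ₗ[R] A :=
  ⅟(2 : R) • bilinCommutator dot

theorem polarizedProduct_comm (dot : A →ₗ[R] A →ₗ[R] A) (a b : A) :
    polarizedProduct dot a b = polarizedProduct dot b a :=
  congrArg (⅟(2 : R) • ·) (add_comm (dot a b) (dot b a))

theorem polarizedBracket_anticomm (dot : A →ₗ[R] A →ₗ[R] A) (a b : A) :
    polarizedBracket dot a b = -polarizedBracket dot b a := by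
  simp only [polarizedBracket, bilinCommutator, LinearMap.smul_apply, LinearMap.sub_apply,
    LinearMap.flip_apply, ← smul_neg, neg_sub]

theorem polarizedProduct_add_polarizedBracket (dot : A →ₗ[R] A →ₗ[R] A) :
    polarizedProduct dot + polarizedBracket dot = dot := by
  rw [polarizedProduct, polarizedBracket, bilinCommutator, ← smul_add, add_add_sub_cancel,
    smul_add, invOf_two_smul_add_invOf_two_smul]

theorem kokoris_polarization_isAlmostPoisson_general {dot : A →ₗ[R] A →ₗ[R] A}
    (h : IsKokoris dot) : IsAlmostPoisson (polarizedProduct dot) (polarizedBracket dot) := by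
  rw [← polarizedProduct_add_polarizedBracket dot] at h
  exact h.isAlmostPoisson (polarizedProduct_comm dot) (polarizedBracket_anticomm dot)

end Bilinear

/-- Polarization of a Kokoris algebra product,
`ab := (a⬝b + b⬝a)/2` and `{a,b} := (a⬝b - b⬝a)/2`, yields an almost Poisson
algebra: the product is commutative and associative, the bracket is
anticommutative, and the Leibniz identity holds. -/
theorem kokoris_polarization_isAlmostPoisson
    {k A : Type*} [Field k] [CharZero k] [AddCommGroup A] [Module k A]
    (dot : A →ₗ[k] A →ₗ[k] A)
    (hkok : ∀ a₁ a₂ a₃ : A,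
      let lb : A → A → A := fun x y => dot x y - dot y x
      let asc : A → A → A → A := fun x y z => dot (dot x y) z - dot x (dot y z)
      lb (lb a₁ a₂) a₃ + lb (lb a₂ a₃) a₁ + lb (lb a₃ a₁) a₂
        = (4 : k) • asc a₁ a₂ a₃ - lb (lb a₁ a₃) a₂) :
    let m : A → A → A := fun x y => (2 : k)⁻¹ • (dot x y + dot y x)
    let br : A → A → A := fun x y => (2 : k)⁻¹ • (dot x y - dot y x)
    (∀ a b : A, m a b = m b a) ∧
    (∀ a b c : A, m (m a b) c = m a (m b c)) ∧
    (∀ a b : A, br a b = - br b a) ∧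
    (∀ a₁ a₂ a₃ : A, br (m a₁ a₂) a₃ = m (br a₁ a₃) a₂ + m a₁ (br a₂ a₃)) := by
  let _ : Invertible (2 : k) := invertibleOfNonzero two_ne_zero
  obtain ⟨mul_comm, mul_assoc, bracket_anticomm, leibniz⟩ :=
    kokoris_polarization_isAlmostPoisson_general (dot := dot) hkok
  exact ⟨mul_comm, mul_assoc, bracket_anticomm, leibniz⟩
end

section
/- Let $A$ be a vector space over a field $k$ of characteristic zero with a bilinear product $a\cdot b$, and let $\{a,b\}' := \tfrac{1}{2}(a\cdot b - b\cdot a)$. Then $A$ satisfies the Kokoris identity $J(a_1,a_2,a_3) = 4(a_1,a_2,a_3) - [[a_1,a_3],a_2]$ for all $a_1,a_2,a_3$ if and only if for all $a_1,a_2,a_3$ the associator of the product equals the associator of the bracket $\{\,,\,\}'$, i.e., $(a_1\cdot a_2)\cdot a_3 - a_1\cdot(a_2\cdot a_3) = \{\{a_1,a_2\}',a_3\}' - \{a_1,\{a_2,a_3\}'\}'$. -/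
/-!
For any skew-symmetric bilinear bracket, replacing `[[z,x],y]` by `-[[x,z],y]` and `[[y,z],x]` by
`-[x,[y,z]]` turns the Jacobiator into the associator of the bracket minus `[[x,z],y]`. The Kokoris
identity therefore says that the associator of the commutator is four times that of the product.
An associator is quadratic in its product, so halving the commutator absorbs exactly the factor `4`.
-/

/-- A not necessarily associative bilinear product on a module, encoded as a curried bilinear map;
the name serves to give the constructions below a namespace. -/
abbrev BilinearProduct (k A : Type*) [CommRing k] [AddCommGroup A] [Module k A] : Type _ :=
  A →ₗ[k] A →ₗ[k] A

namespace BilinearProduct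

variable {k A : Type*} [CommRing k] [AddCommGroup A] [Module k A]

/-- The associator `(x, y, z)` of a bilinear product, measuring its failure to be associative. -/
def associator (μ : BilinearProduct k A) (x y z : A) : A :=
  μ (μ x y) z - μ x (μ y z)

/-- The Jacobiator of a bilinear bracket, measuring its failure to satisfy the Jacobi identity.
The paper's `J` is the Jacobiator of the commutator. -/
def jacobiator (β : BilinearProduct k A) (x y z : A) : A :=
  β (β x y) z + β (β y z) x + β (β z x) y

/-- The commutator bracket `[x, y]` of a bilinear product, again as a bilinear product, so that its
associator and Jacobiator can be formed. -/
def commutator (μ : BilinearProduct k A) : BilinearProduct k A :=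
  μ - μ.flip

/-- The bracket `{x, y}'`, the commutator normalized by the factor `1 / 2`. -/
def halfCommutator [Invertible (2 : k)] (μ : BilinearProduct k A) : BilinearProduct k A :=
  (⅟2 : k) • μ.commutator

theorem associator_smul (c : k) (μ : BilinearProduct k A) (x y z : A) :
    associator (c • μ) x y z = c ^ 2 • associator μ x y z := by
  simp only [associator, LinearMap.smul_apply, map_smul, smul_sub, smul_smul, sq]

theorem commutator_swap (μ : BilinearProduct k A) (x y : A) :
    μ.commutator x y = -μ.commutator y x :=
  (neg_sub (μ y x) (μ x y)).symm

theorem jacobiator_eq_associator_sub_of_skew {β : BilinearProduct k A}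
    (hβ : ∀ x y, β x y = -β y x) (x y z : A) :
    β.jacobiator x y z = β.associator x y z - β (β x z) y := by
  have h_cyclic : β (β y z) x = -β x (β y z) := hβ _ _
  have h_swap : β (β z x) y = -β (β x z) y := by
    rw [hβ z x, map_neg, LinearMap.neg_apply]
  rw [jacobiator, h_cyclic, h_swap, ← sub_eq_add_neg, ← sub_eq_add_neg, associator]

theorem four_smul_associator_halfCommutator [Invertible (2 : k)] (μ : BilinearProduct k A)
    (x y z : A) :
    (4 : k) • μ.halfCommutator.associator x y z = μ.commutator.associator x y z := by
  have h_four : (4 : k) * ⅟2 ^ 2 = 1 := by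
    rw [show (4 : k) = 2 ^ 2 by norm_num, ← mul_pow, mul_invOf_self, one_pow]
  rw [halfCommutator, associator_smul, smul_smul, h_four, one_smul]

end BilinearProduct

theorem kokoris_iff_associators_equal_general
    {k A : Type*} [CommRing k] [Invertible (2 : k)] [AddCommGroup A] [Module k A]
    (μ : BilinearProduct k A) (x y z : A) :
    μ.commutator.jacobiator x y z
        = (4 : k) • μ.associator x y z - μ.commutator (μ.commutator x z) y
      ↔ μ.associator x y z = μ.halfCommutator.associator x y z := by
  have h_four : IsUnit (4 : k) := by
    rw [show (4 : k) = 2 ^ 2 by norm_num]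
    exact (isUnit_of_invertible 2).pow 2
  rw [BilinearProduct.jacobiator_eq_associator_sub_of_skew μ.commutator_swap, sub_left_inj,
    ← μ.four_smul_associator_halfCommutator, h_four.smul_left_cancel, eq_comm]

/-- A bilinear product satisfies the Kokoris identity
`J(a₁,a₂,a₃) = 4(a₁,a₂,a₃) - [[a₁,a₃],a₂]` if and only if the associator of the
product equals the associator of the half-commutator `{x,y}' = (x⬝y - y⬝x)/2`. -/
theorem kokoris_iff_associators_equal
    {k A : Type*} [Field k] [CharZero k] [AddCommGroup A] [Module k A]
    (dot : A →ₗ[k] A →ₗ[k] A) :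
    let lb : A → A → A := fun x y => dot x y - dot y x
    let asc : A → A → A → A := fun x y z => dot (dot x y) z - dot x (dot y z)
    let br' : A → A → A := fun x y => (2 : k)⁻¹ • (dot x y - dot y x)
    (∀ a₁ a₂ a₃ : A,
        lb (lb a₁ a₂) a₃ + lb (lb a₂ a₃) a₁ + lb (lb a₃ a₁) a₂
          = (4 : k) • asc a₁ a₂ a₃ - lb (lb a₁ a₃) a₂)
      ↔ (∀ a₁ a₂ a₃ : A,
        dot (dot a₁ a₂) a₃ - dot a₁ (dot a₂ a₃)
          = br' (br' a₁ a₂) a₃ - br' a₁ (br' a₂ a₃)) := by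
  let : Invertible (2 : k) := invertibleOfNonzero two_ne_zero
  exact forall₃_congr (kokoris_iff_associators_equal_general dot)
end

section
/- Let $k$ be a field of characteristic zero, $A$ a $k$-vector space with a commutative bilinear product $(a,b)\mapsto ab$ and an anticommutative bilinear bracket $(a,b)\mapsto\{a,b\}$, and let $s\in k$ with $t := s^2$. Assume the Livernet–Loday relations with parameter $t$: $(a_1a_2)a_3 - a_1(a_2a_3) = t\,\{a_2,\{a_1,a_3\}\}$, $\{a_1a_2,a_3\} = \{a_1,a_3\}a_2 + a_1\{a_2,a_3\}$, and $\{\{a_1,a_2\},a_3\} + \{\{a_2,a_3\},a_1\} + \{\{a_3,a_1\},a_2\} = 0$. Then the depolarized product $a\cdot b := \tfrac{1}{2}(ab + s\{a,b\})$ is associative: $(a\cdot b)\cdot c = a\cdot(b\cdot c)$ for all $a,b,c\in A$. -/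
/-!
Write `μ ∘ ν` for the trilinear map `μ(ν(a,b),c) - μ(a,ν(b,c))`, so that `μ ∘ μ` is the associator
of `μ`. For a product `μ` and a bracket `β`,
`(μ + sβ) ∘ (μ + sβ) = μ ∘ μ + s (μ ∘ β + β ∘ μ) + s² β ∘ β`.
The coefficient of `s` vanishes by the Leibniz identity in both slots. For the remaining terms,
anticommutativity gives `{{a,b},c} - {a,{b,c}} = -{c,{a,b}} - {a,{b,c}}`, and the Livernet–Loday
relation turns `s²` times each of these double brackets into an associator of `μ`; since `μ` is
commutative, the total is `-(μ ∘ μ)(a,b,c)`.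
-/

section GerstenhaberCirc

variable {R A : Type*} [CommRing R] [AddCommGroup A] [Module R A]

/-- The Gerstenhaber circle product `μ ∘ ν` of two bilinear maps (Hochschild 2-cochains), evaluated
at three arguments. The diagonal `μ ∘ μ` is the associator of `μ`; allowing two different maps makes
the associator of a linear combination expand bilinearly. -/
def gerstenhaberCirc (μ ν : A →ₗ[R] A →ₗ[R] A) (a b c : A) : A :=
  μ (ν a b) c - μ a (ν b c)

theorem gerstenhaberCirc_smul_smul (r : R) (μ ν : A →ₗ[R] A →ₗ[R] A) (a b c : A) :
    gerstenhaberCirc (r • μ) (r • ν) a b c = r ^ 2 • gerstenhaberCirc μ ν a b c := by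
  simp only [gerstenhaberCirc, LinearMap.smul_apply, map_smul]
  module

theorem gerstenhaberCirc_add_smul_self (s : R) (μ ν : A →ₗ[R] A →ₗ[R] A) (a b c : A) :
    gerstenhaberCirc (μ + s • ν) (μ + s • ν) a b c =
      gerstenhaberCirc μ μ a b c +
        s • (gerstenhaberCirc μ ν a b c + gerstenhaberCirc ν μ a b c) +
        s ^ 2 • gerstenhaberCirc ν ν a b c := by
  simp only [gerstenhaberCirc, LinearMap.add_apply, LinearMap.smul_apply, map_add, map_smul]
  module

end GerstenhaberCirc

section ProductAndBracket

variable {R A : Type*} [CommRing R] [AddCommGroup A] [Module R A] {m br : A →ₗ[R] A →ₗ[R] A}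

theorem bracket_mul_right_of_leibniz (hanti : ∀ a b : A, br a b = - br b a)
    (hleib : ∀ a₁ a₂ a₃ : A, br (m a₁ a₂) a₃ = m (br a₁ a₃) a₂ + m a₁ (br a₂ a₃))
    (a b c : A) : br a (m b c) = m (br a b) c + m b (br a c) :=
  calc br a (m b c) = -(m (br b a) c + m b (br c a)) := by rw [hanti, hleib]
    _ = m (-br b a) c + m b (-br c a) := by simp only [map_neg, LinearMap.neg_apply, neg_add]
    _ = m (br a b) c + m b (br a c) := by rw [← hanti, ← hanti]

theorem gerstenhaberCirc_mul_bracket_add_bracket_mul (hcomm : ∀ a b : A, m a b = m b a)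
    (hanti : ∀ a b : A, br a b = - br b a)
    (hleib : ∀ a₁ a₂ a₃ : A, br (m a₁ a₂) a₃ = m (br a₁ a₃) a₂ + m a₁ (br a₂ a₃))
    (a b c : A) : gerstenhaberCirc m br a b c + gerstenhaberCirc br m a b c = 0 := by
  simp only [gerstenhaberCirc]
  rw [hleib a b c, bracket_mul_right_of_leibniz hanti hleib a b c, hcomm b (br a c)]
  abel

theorem gerstenhaberCirc_mul_self_add_smul_bracket_self {t : R} (hcomm : ∀ a b : A, m a b = m b a)
    (hanti : ∀ a b : A, br a b = - br b a)
    (hLL : ∀ a₁ a₂ a₃ : A, m (m a₁ a₂) a₃ - m a₁ (m a₂ a₃) = t • br a₂ (br a₁ a₃))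
    (a b c : A) : gerstenhaberCirc m m a b c + t • gerstenhaberCirc br br a b c = 0 := by
  have bracket_left : t • br (br a b) c = m a (m b c) - m (m a c) b := by
    rw [hanti (br a b) c, smul_neg, ← hLL a c b, neg_sub, hcomm c b]
  have bracket_right : t • br a (br b c) = m (m a b) c - m (m a c) b := by
    rw [← hLL b a c, hcomm b a, hcomm b (m a c)]
  rw [gerstenhaberCirc, gerstenhaberCirc, smul_sub, bracket_left, bracket_right]
  abel

end ProductAndBracket

theorem livernetLoday_depolarization_isAssociative_general
    {R A : Type*} [CommRing R] [AddCommGroup A] [Module R A]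
    (m : A →ₗ[R] A →ₗ[R] A) (br : A →ₗ[R] A →ₗ[R] A) (r s : R)
    (hcomm : ∀ a b : A, m a b = m b a)
    (hanti : ∀ a b : A, br a b = - br b a)
    (hLL : ∀ a₁ a₂ a₃ : A,
      m (m a₁ a₂) a₃ - m a₁ (m a₂ a₃) = (s ^ 2) • br a₂ (br a₁ a₃))
    (hleib : ∀ a₁ a₂ a₃ : A, br (m a₁ a₂) a₃ = m (br a₁ a₃) a₂ + m a₁ (br a₂ a₃)) :
    ∀ a b c : A,
      let dot : A → A → A := fun x y => r • (m x y + s • br x y)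
      dot (dot a b) c = dot a (dot b c) := by
  intro a b c
  suffices gerstenhaberCirc (r • (m + s • br)) (r • (m + s • br)) a b c = 0 from
    sub_eq_zero.mp this
  rw [gerstenhaberCirc_smul_smul, gerstenhaberCirc_add_smul_self,
    gerstenhaberCirc_mul_bracket_add_bracket_mul hcomm hanti hleib, smul_zero, add_zero,
    gerstenhaberCirc_mul_self_add_smul_bracket_self hcomm hanti hLL, smul_zero]

/-- If a commutative product and an anticommutative bracket satisfy
the Livernet–Loday relations with parameter `t = s²`, then the depolarized
product `a ⬝ b = (ab + s{a,b})/2` is associative. -/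
theorem livernetLoday_depolarization_isAssociative
    {k A : Type*} [Field k] [CharZero k] [AddCommGroup A] [Module k A]
    (m : A →ₗ[k] A →ₗ[k] A) (br : A →ₗ[k] A →ₗ[k] A) (s : k)
    (hcomm : ∀ a b : A, m a b = m b a)
    (hanti : ∀ a b : A, br a b = - br b a)
    (hLL : ∀ a₁ a₂ a₃ : A,
      m (m a₁ a₂) a₃ - m a₁ (m a₂ a₃) = (s ^ 2) • br a₂ (br a₁ a₃))
    (hleib : ∀ a₁ a₂ a₃ : A, br (m a₁ a₂) a₃ = m (br a₁ a₃) a₂ + m a₁ (br a₂ a₃))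
    (hjac : ∀ a₁ a₂ a₃ : A,
      br (br a₁ a₂) a₃ + br (br a₂ a₃) a₁ + br (br a₃ a₁) a₂ = 0) :
    ∀ a b c : A,
      let dot : A → A → A := fun x y => (2 : k)⁻¹ • (m x y + s • br x y)
      dot (dot a b) c = dot a (dot b c) :=
  livernetLoday_depolarization_isAssociative_general m br 2⁻¹ s hcomm hanti hLL hleib
end
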